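/- Let D ∈ ℝ^{K×K} be symmetric positive definite with smallest eigenvalue λ_min > 0 and largest eigenvalue λ_max, let V ∈ ℝ^{K×K} be symmetric positive semidefinite, and let 0 < α < 1/(2λ_max). Consider the recursion F_{n+1} = (I − 2αD)·F_n·(I − 2αD) + 4α²·DVD on symmetric K×K matrices, started from an arbitrary symmetric F₀. Then F_n converges (as n → ∞) to F_∞ = 4α²·Σ_{k=0}^∞ (I − 2αD)^k · DVD · (I − 2αD)^k, which is the unique symmetric fixed point of the recursion, is independent of F₀, and satisfies the operator-norm bound ‖F_∞‖ ≤ 2α·λ_max²·‖V‖/λ_min; in particular F_∞ = O(α) as α → 0. -/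

import Mathlib

open Matrix Filter

/-- The `ℓ²`-operator (spectral) norm of a real square matrix. -/
noncomputable def matOpNorm {K : ℕ} (M : Matrix (Fin K) (Fin K) ℝ) : ℝ :=
  ‖LinearMap.toContinuousLinearMap (Matrix.toEuclideanLin M)‖

/-- The matrix `S = I − 2αD`. -/
noncomputable def Smat {K : ℕ} (α : ℝ) (D : Matrix (Fin K) (Fin K) ℝ) :
    Matrix (Fin K) (Fin K) ℝ :=
  1 - (2 * α) • D

/-- The limit `F_∞ = 4α²·Σ_{k=0}^∞ Sᵏ·DVD·Sᵏ` of the covariance recursion. -/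
noncomputable def Flim {K : ℕ} (α : ℝ) (D V : Matrix (Fin K) (Fin K) ℝ) :
    Matrix (Fin K) (Fin K) ℝ :=
  ∑' k : ℕ, (4 * α ^ 2) • (Smat α D ^ k * (D * V * D) * Smat α D ^ k)

/-!
Since `S = I − 2αD` is symmetric, its spectral norm is the supremum of the absolute value of its
Rayleigh quotient, hence at most `1 − 2αλ_min` as long as `α(λ_min + λ_max) ≤ 1`. The map
`X ↦ S X S + Q` is then a contraction of the Banach algebra of matrices, and its fixed point is the
Neumann series `∑ₖ Sᵏ Q Sᵏ`, of norm at most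
`‖Q‖ / (1 − ‖S‖²) ≤ ‖Q‖ / (1 − ‖S‖) ≤ ‖Q‖ / (2αλ_min)`.
Taking `Q = 4α² DVD`, so that `‖Q‖ ≤ 4α²λ_max²‖V‖`, gives the bound.
-/

section SteinSeries

variable {R : Type*} [NormedRing R] {A B Q : R}

/-- The Neumann series `∑ₖ Aᵏ Q Bᵏ` of the discrete Sylvester (Stein) equation `X = A X B + Q`.
As a `tsum` it is `0` when the series is not summable. -/
noncomputable def steinSeries (A B Q : R) : R :=
  ∑' k : ℕ, A ^ k * Q * B ^ k

theorem norm_pow_mul_mul_pow_le (A B Q : R) (k : ℕ) :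
    ‖A ^ k * Q * B ^ k‖ ≤ ‖Q‖ * (‖A‖ * ‖B‖) ^ k := by
  induction k with
  | zero => simp
  | succ k ih =>
    calc ‖A ^ (k + 1) * Q * B ^ (k + 1)‖ = ‖A * (A ^ k * Q * B ^ k) * B‖ := by
          simp only [pow_succ' A, pow_succ B, mul_assoc]
      _ ≤ ‖A‖ * ‖A ^ k * Q * B ^ k‖ * ‖B‖ := norm_mul₃_le
      _ ≤ ‖A‖ * (‖Q‖ * (‖A‖ * ‖B‖) ^ k) * ‖B‖ := by gcongr
      _ = ‖Q‖ * (‖A‖ * ‖B‖) ^ (k + 1) := by ring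

theorem summable_pow_mul_mul_pow [CompleteSpace R] (h : ‖A‖ * ‖B‖ < 1) (Q : R) :
    Summable fun k : ℕ ↦ A ^ k * Q * B ^ k :=
  .of_norm_bounded ((summable_geometric_of_lt_one (by positivity) h).mul_left ‖Q‖)
    (norm_pow_mul_mul_pow_le A B Q)

theorem norm_steinSeries_le (h : ‖A‖ * ‖B‖ < 1) (Q : R) :
    ‖steinSeries A B Q‖ ≤ ‖Q‖ / (1 - ‖A‖ * ‖B‖) :=
  tsum_of_norm_bounded ((hasSum_geometric_of_lt_one (by positivity) h).mul_left ‖Q‖)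
    (norm_pow_mul_mul_pow_le A B Q)

theorem steinSeries_eq_mul_mul_add [CompleteSpace R] (h : ‖A‖ * ‖B‖ < 1) (Q : R) :
    steinSeries A B Q = A * steinSeries A B Q * B + Q := by
  have hsum := summable_pow_mul_mul_pow h Q
  calc steinSeries A B Q
      = A ^ 0 * Q * B ^ 0 + ∑' k : ℕ, A ^ (k + 1) * Q * B ^ (k + 1) := hsum.tsum_eq_zero_add
    _ = Q + ∑' k : ℕ, A * (A ^ k * Q * B ^ k) * B := by
        simp only [pow_zero, one_mul, mul_one, pow_succ' A, pow_succ B, mul_assoc]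
    _ = A * steinSeries A B Q * B + Q := by
        rw [(hsum.mul_left A).tsum_mul_right, hsum.tsum_mul_left, add_comm, steinSeries]

theorem star_steinSeries [StarRing R] [ContinuousStar R] (A B Q : R) :
    star (steinSeries A B Q) = steinSeries (star B) (star A) (star Q) := by
  simp only [steinSeries, tsum_star, star_mul, star_pow, mul_assoc]

theorem sub_eq_pow_mul_sub_mul_pow {L : R} (hL : L = A * L * B + Q) {F : ℕ → R}
    (hF : ∀ n, F (n + 1) = A * F n * B + Q) (n : ℕ) :
    F n - L = A ^ n * (F 0 - L) * B ^ n := by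
  induction n with
  | zero => simp
  | succ n ih =>
    calc F (n + 1) - L = (A * F n * B + Q) - (A * L * B + Q) := by rw [hF, ← hL]
      _ = A * (F n - L) * B := by noncomm_ring
      _ = A ^ (n + 1) * (F 0 - L) * B ^ (n + 1) := by
          simp only [ih, pow_succ' A, pow_succ B, mul_assoc]

theorem tendsto_steinSeries [CompleteSpace R] (h : ‖A‖ * ‖B‖ < 1) {F : ℕ → R}
    (hF : ∀ n, F (n + 1) = A * F n * B + Q) :
    Tendsto F atTop (nhds (steinSeries A B Q)) := by
  rw [← tendsto_sub_nhds_zero_iff]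
  exact (summable_pow_mul_mul_pow h _).tendsto_atTop_zero.congr fun n ↦
    (sub_eq_pow_mul_sub_mul_pow (steinSeries_eq_mul_mul_add h Q) hF n).symm

theorem eq_steinSeries [CompleteSpace R] (h : ‖A‖ * ‖B‖ < 1) {G : R} (hG : G = A * G * B + Q) :
    G = steinSeries A B Q :=
  tendsto_nhds_unique tendsto_const_nhds (tendsto_steinSeries (F := fun _ ↦ G) h fun _ ↦ hG)

end SteinSeries

section Rayleigh

variable {𝕜 E : Type*} [RCLike 𝕜] [NormedAddCommGroup E] [InnerProductSpace 𝕜 E] {T : E →L[𝕜] E}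

theorem opNorm_le_of_abs_reApplyInnerSelf_le (hT : T.IsSymmetric) {c : ℝ} (hc : 0 ≤ c)
    (h : ∀ x, |T.reApplyInnerSelf x| ≤ c * ‖x‖ ^ 2) : ‖T‖ ≤ c := by
  rw [T.norm_eq_iSup_rayleighQuotient hT]
  refine ciSup_le fun x ↦ ?_
  rw [ContinuousLinearMap.rayleighQuotient, abs_div, abs_sq]
  exact div_le_of_le_mul₀ (sq_nonneg _) hc (h x)

theorem reApplyInnerSelf_one_sub_smul (T : E →L[𝕜] E) (c : ℝ) (x : E) :
    (1 - (c : 𝕜) • T).reApplyInnerSelf x = ‖x‖ ^ 2 - c * T.reApplyInnerSelf x := by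
  simp [ContinuousLinearMap.reApplyInnerSelf_apply, inner_sub_left, inner_smul_left]

theorem opNorm_one_sub_smul_le (hT : T.IsSymmetric) {m M c : ℝ} (hmM : m ≤ M)
    (hm : ∀ x, m * ‖x‖ ^ 2 ≤ T.reApplyInnerSelf x) (hM : ∀ x, T.reApplyInnerSelf x ≤ M * ‖x‖ ^ 2)
    (hc : 0 ≤ c) (hcmM : c * (m + M) ≤ 2) : ‖1 - (c : 𝕜) • T‖ ≤ 1 - c * m := by
  have hsymm : (1 - (c : 𝕜) • T).IsSymmetric :=
    LinearMap.IsSymmetric.one.sub (hT.smul (RCLike.conj_ofReal c))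
  have hcm : c * m ≤ c * M := by gcongr
  refine opNorm_le_of_abs_reApplyInnerSelf_le hsymm (by linarith) fun x ↦ ?_
  rw [reApplyInnerSelf_one_sub_smul, abs_le]
  have hlower : c * (m * ‖x‖ ^ 2) ≤ c * T.reApplyInnerSelf x := by gcongr; exact hm x
  have hupper : c * T.reApplyInnerSelf x ≤ c * (M * ‖x‖ ^ 2) := by gcongr; exact hM x
  have hstep : c * (m + M) * ‖x‖ ^ 2 ≤ 2 * ‖x‖ ^ 2 := by gcongr
  constructor <;> linarith

end Rayleigh

section QuadraticForm

variable {n : Type*} [Fintype n]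

theorem le_of_quadForm_bounds [Nonempty n] {A : Matrix n n ℝ} {m M : ℝ}
    (hm : ∀ x : n → ℝ, m * ∑ i, x i ^ 2 ≤ x ⬝ᵥ A *ᵥ x)
    (hM : ∀ x : n → ℝ, x ⬝ᵥ A *ᵥ x ≤ M * ∑ i, x i ^ 2) : m ≤ M := by
  have h := (hm 1).trans (hM 1)
  have hpos : 0 < ∑ i : n, (1 : n → ℝ) i ^ 2 := by simp [Fintype.card_pos]
  exact le_of_mul_le_mul_right h hpos

variable [DecidableEq n]

theorem reApplyInnerSelf_toEuclideanCLM (A : Matrix n n ℝ) (x : EuclideanSpace ℝ n) :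
    (toEuclideanCLM (𝕜 := ℝ) A).reApplyInnerSelf x = x ⬝ᵥ A *ᵥ x := by
  rw [ContinuousLinearMap.reApplyInnerSelf_apply, real_inner_comm, inner_toEuclideanCLM]
  rfl

theorem isSymmetric_toEuclideanCLM {A : Matrix n n ℝ} (hA : A.IsSymm) :
    (toEuclideanCLM (𝕜 := ℝ) A).IsSymmetric :=
  isSymmetric_toEuclideanLin_iff.2 <| (conjTranspose_eq_transpose_of_trivial A).trans hA

open scoped Matrix.Norms.L2Operator

theorem l2_opNorm_le_of_abs_quadForm_le {A : Matrix n n ℝ} (hA : A.IsSymm) {c : ℝ} (hc : 0 ≤ c)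
    (h : ∀ x : n → ℝ, |x ⬝ᵥ A *ᵥ x| ≤ c * ∑ i, x i ^ 2) : ‖A‖ ≤ c := by
  refine opNorm_le_of_abs_reApplyInnerSelf_le (isSymmetric_toEuclideanCLM hA) hc fun x ↦ ?_
  rw [reApplyInnerSelf_toEuclideanCLM, EuclideanSpace.real_norm_sq_eq]
  exact h x

theorem l2_opNorm_one_sub_smul_le {A : Matrix n n ℝ} (hA : A.IsSymm) {m M c : ℝ} (hmM : m ≤ M)
    (hm : ∀ x : n → ℝ, m * ∑ i, x i ^ 2 ≤ x ⬝ᵥ A *ᵥ x)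
    (hM : ∀ x : n → ℝ, x ⬝ᵥ A *ᵥ x ≤ M * ∑ i, x i ^ 2)
    (hc : 0 ≤ c) (hcmM : c * (m + M) ≤ 2) : ‖1 - c • A‖ ≤ 1 - c * m := by
  have h := opNorm_one_sub_smul_le (isSymmetric_toEuclideanCLM hA) hmM
    (fun x ↦ by
      simpa only [reApplyInnerSelf_toEuclideanCLM, EuclideanSpace.real_norm_sq_eq] using hm x)
    (fun x ↦ by
      simpa only [reApplyInnerSelf_toEuclideanCLM, EuclideanSpace.real_norm_sq_eq] using hM x)
    hc hcmM
  rwa [RCLike.ofReal_real_eq_id, id, ← map_one (toEuclideanCLM (n := n) (𝕜 := ℝ)), ← map_smul,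
    ← map_sub, l2_opNorm_toEuclideanCLM] at h

end QuadraticForm

section CovarianceRecursion

open scoped Matrix.Norms.L2Operator

variable {K : ℕ} {D V : Matrix (Fin K) (Fin K) ℝ} {lmin lmax α : ℝ}

theorem matOpNorm_eq_l2_opNorm (M : Matrix (Fin K) (Fin K) ℝ) : matOpNorm M = ‖M‖ := rfl

theorem Flim_eq_steinSeries (α : ℝ) (D V : Matrix (Fin K) (Fin K) ℝ) :
    Flim α D V = steinSeries (Smat α D) (Smat α D) ((4 * α ^ 2) • (D * V * D)) := by
  simp only [Flim, steinSeries, mul_smul_comm, smul_mul_assoc]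

theorem isSymm_Flim (hD : D.IsSymm) (hV : V.IsSymm) (α : ℝ) : (Flim α D V).IsSymm := by
  have hS : star (Smat α D) = Smat α D := by
    simp [Smat, star_eq_conjTranspose, hD.eq]
  have hQ : star ((4 * α ^ 2) • (D * V * D)) = (4 * α ^ 2) • (D * V * D) := by
    simp [star_eq_conjTranspose, hD.eq, hV.eq, mul_assoc]
  rw [Matrix.IsSymm, ← conjTranspose_eq_transpose_of_trivial, ← star_eq_conjTranspose,
    Flim_eq_steinSeries, star_steinSeries, hS, hQ]

theorem norm_Flim_le (hlmin : 0 < lmin) (hα : 0 < α) (hD : ‖D‖ ≤ lmax)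
    (hS : ‖Smat α D‖ ≤ 1 - 2 * α * lmin) :
    ‖Flim α D V‖ ≤ 2 * α * lmax ^ 2 * ‖V‖ / lmin := by
  have hgap : 0 < 2 * α * lmin := by positivity
  have hS_sq : ‖Smat α D‖ * ‖Smat α D‖ ≤ 1 - 2 * α * lmin :=
    (mul_le_of_le_one_right (norm_nonneg _) (by linarith)).trans hS
  have hlmax : 0 ≤ lmax := (norm_nonneg D).trans hD
  have hDVD : ‖D * V * D‖ ≤ lmax * ‖V‖ * lmax := norm_mul₃_le.trans (by gcongr)
  calc ‖Flim α D V‖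
      ≤ ‖(4 * α ^ 2) • (D * V * D)‖ / (1 - ‖Smat α D‖ * ‖Smat α D‖) := by
        rw [Flim_eq_steinSeries]
        exact norm_steinSeries_le (by linarith) _
    _ = 4 * α ^ 2 * ‖D * V * D‖ / (1 - ‖Smat α D‖ * ‖Smat α D‖) := by
        rw [norm_smul, Real.norm_of_nonneg (by positivity)]
    _ ≤ 4 * α ^ 2 * (lmax * ‖V‖ * lmax) / (2 * α * lmin) := by gcongr; linarith
    _ = 2 * α * lmax ^ 2 * ‖V‖ / lmin := by field_simp; ring

theorem stmt14_general (hD : D.IsSymm) (hlmin : 0 < lmin) (hle : lmin ≤ lmax)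
    (hquadmin : ∀ x : Fin K → ℝ, lmin * ∑ i, x i ^ 2 ≤ x ⬝ᵥ D *ᵥ x)
    (hquadmax : ∀ x : Fin K → ℝ, x ⬝ᵥ D *ᵥ x ≤ lmax * ∑ i, x i ^ 2)
    (hα0 : 0 < α) (hα : α * (lmin + lmax) ≤ 1) :
    (∀ F : ℕ → Matrix (Fin K) (Fin K) ℝ,
      (∀ n, F (n + 1) = Smat α D * F n * Smat α D + (4 * α ^ 2) • (D * V * D)) →
      Tendsto F atTop (nhds (Flim α D V))) ∧
    Flim α D V = Smat α D * Flim α D V * Smat α D + (4 * α ^ 2) • (D * V * D) ∧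
    (V.IsSymm → (Flim α D V).IsSymm) ∧
    (∀ G : Matrix (Fin K) (Fin K) ℝ,
      G = Smat α D * G * Smat α D + (4 * α ^ 2) • (D * V * D) → G = Flim α D V) ∧
    matOpNorm (Flim α D V) ≤ 2 * α * lmax ^ 2 * matOpNorm V / lmin := by
  have hD_norm : ‖D‖ ≤ lmax := by
    refine l2_opNorm_le_of_abs_quadForm_le hD (hlmin.le.trans hle) fun x ↦ ?_
    rw [abs_of_nonneg ((by positivity : 0 ≤ lmin * ∑ i, x i ^ 2).trans (hquadmin x))]
    exact hquadmax x
  have hS_norm : ‖Smat α D‖ ≤ 1 - 2 * α * lmin :=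
    l2_opNorm_one_sub_smul_le hD hle hquadmin hquadmax (by positivity) (by linarith)
  have hS_lt_one : ‖Smat α D‖ < 1 := hS_norm.trans_lt (by linarith [mul_pos hα0 hlmin])
  have hS_sq_lt_one : ‖Smat α D‖ * ‖Smat α D‖ < 1 :=
    mul_lt_one_of_nonneg_of_lt_one_left (norm_nonneg _) hS_lt_one hS_lt_one.le
  have hbound : matOpNorm (Flim α D V) ≤ 2 * α * lmax ^ 2 * matOpNorm V / lmin := by
    rw [matOpNorm_eq_l2_opNorm, matOpNorm_eq_l2_opNorm]
    exact norm_Flim_le hlmin hα0 hD_norm hS_norm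
  refine ⟨fun F hF ↦ ?_, ?_, fun hV ↦ isSymm_Flim hD hV α, fun G hG ↦ ?_, hbound⟩ <;>
    rw [Flim_eq_steinSeries]
  · exact tendsto_steinSeries hS_sq_lt_one hF
  · exact steinSeries_eq_mul_mul_add hS_sq_lt_one _
  · exact eq_steinSeries hS_sq_lt_one hG

end CovarianceRecursion

/-- For `D` symmetric positive definite with eigenvalues in `[λ_min, λ_max]`,
`V` symmetric positive semidefinite, and `0 < α < 1/(2λ_max)`, the recursion
`F_{n+1} = (I − 2αD)·F_n·(I − 2αD) + 4α²·DVD` converges from any symmetric `F₀` to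
`F_∞ = 4α²·Σₖ (I−2αD)ᵏ·DVD·(I−2αD)ᵏ`, the unique symmetric fixed point, which is
independent of `F₀` and satisfies `‖F_∞‖ ≤ 2α·λ_max²·‖V‖/λ_min` in operator norm. -/
theorem stmt14 {K : ℕ} (hK : 1 ≤ K)
    (D V : Matrix (Fin K) (Fin K) ℝ) (hD : D.IsSymm) (hV : V.IsSymm)
    (lmin lmax : ℝ) (hlmin : 0 < lmin)
    (hquadmin : ∀ x : Fin K → ℝ, lmin * ∑ i, x i ^ 2 ≤ x ⬝ᵥ D.mulVec x)
    (hquadmax : ∀ x : Fin K → ℝ, x ⬝ᵥ D.mulVec x ≤ lmax * ∑ i, x i ^ 2)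
    (hVpsd : ∀ x : Fin K → ℝ, 0 ≤ x ⬝ᵥ V.mulVec x)
    (α : ℝ) (hα0 : 0 < α) (hα : α < 1 / (2 * lmax)) :
    (∀ F₀ : Matrix (Fin K) (Fin K) ℝ, F₀.IsSymm →
      ∀ F : ℕ → Matrix (Fin K) (Fin K) ℝ, F 0 = F₀ →
        (∀ n, F (n + 1) = Smat α D * F n * Smat α D + (4 * α ^ 2) • (D * V * D)) →
        Tendsto F atTop (nhds (Flim α D V))) ∧
    Flim α D V = Smat α D * Flim α D V * Smat α D + (4 * α ^ 2) • (D * V * D) ∧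
    (Flim α D V).IsSymm ∧
    (∀ G : Matrix (Fin K) (Fin K) ℝ, G.IsSymm →
      G = Smat α D * G * Smat α D + (4 * α ^ 2) • (D * V * D) → G = Flim α D V) ∧
    matOpNorm (Flim α D V) ≤ 2 * α * lmax ^ 2 * matOpNorm V / lmin := by
  have : Nonempty (Fin K) := Fin.pos_iff_nonempty.1 hK
  have hle : lmin ≤ lmax := le_of_quadForm_bounds hquadmin hquadmax
  have hstep : α * (lmin + lmax) ≤ 1 := by
    have hα' : α * (2 * lmax) < 1 := (lt_div_iff₀ (by linarith)).1 hα
    linarith [mul_le_mul_of_nonneg_left hle hα0.le]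
  obtain ⟨htendsto, hfix, hsymm, huniq, hbound⟩ :=
    stmt14_general hD hlmin hle hquadmin hquadmax hα0 hstep
  exact ⟨fun _ _ F _ ↦ htendsto F, hfix, hsymm hV, fun G _ ↦ huniq G, hbound⟩
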